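/- Let η : ℝ³ → ℝ³ be a C² map whose Jacobian ∇η(x) (entries ∂_l η_i) is invertible at every x, let A := (∇η)⁻¹, and define ∂_i^η g := ∑_k A_{ki} ∂_k g. Then for every C² function f : ℝ³ → ℝ and all indices i, j ∈ {1,2,3}: ∂_j(∂_i^η f) − ∂_i^η(∂_j f) = −∑_{l=1}^{3} (∂_i^η (∂_j η_l)) · (∂_l^η f) at every point. -/

import Mathlib

open scoped Matrix BigOperators

/-- Partial derivative `∂_l f` of a scalar function on `ℝ³`. -/
noncomputable def pd (f : (Fin 3 → ℝ) → ℝ) (l : Fin 3) (x : Fin 3 → ℝ) : ℝ :=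
  fderiv ℝ f x (Pi.single l 1)

/-- Jacobian matrix `∇η` with entries `(∇η)_{il} = ∂_l η_i`. -/
noncomputable def Jac (η : (Fin 3 → ℝ) → Fin 3 → ℝ) (x : Fin 3 → ℝ) :
    Matrix (Fin 3) (Fin 3) ℝ :=
  Matrix.of fun i l => pd (fun y => η y i) l x

/-- Transformed derivative `∂_i^η g = ∑_k A_{ki} ∂_k g`, where `A = (∇η)⁻¹`. -/
noncomputable def Deta (η : (Fin 3 → ℝ) → Fin 3 → ℝ) (f : (Fin 3 → ℝ) → ℝ)
    (i : Fin 3) (x : Fin 3 → ℝ) : ℝ :=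
  ∑ k, (Jac η x)⁻¹ k i * pd f k x

/-!
Write `b` for the pullback under `η` of a constant vector field `w`, that is
`b y = (∇η y)⁻¹ w`; then `∂_w^η` is differentiation along `b`, and the commutator of `∂_v` with
`∂_w^η` is differentiation along the Lie bracket `[v, b]`. Applying this commutator to `η` itself
identifies the bracket: `∂_w^η η = w` is constant, so `∇η [v, b] = -∂_w^η ∂_v η`, and inverting
`∇η` gives `[v, b] = -(∇η)⁻¹ (∂_w^η ∂_v η)`.
-/

open VectorField Topology

section CoordinateFree

variable {𝕜 E F G : Type*} [NontriviallyNormedField 𝕜]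
  [NormedAddCommGroup E] [NormedSpace 𝕜 E] [NormedAddCommGroup F] [NormedSpace 𝕜 F]
  [NormedAddCommGroup G] [NormedSpace 𝕜 G] {η : E → F} {f g : E → G} {x : E}

variable (𝕜) in
/-- The transformed derivative `∂_w^η f` without coordinates: the derivative of `f` along the
pullback under `η` of the constant vector field `w`. It is `0` wherever the derivative of `η` is
not invertible. -/
noncomputable def pullbackDeriv (η : E → F) (f : E → G) (w : F) (x : E) : G :=
  fderiv 𝕜 f x (pullback 𝕜 η (fun _ => w) x)

theorem pullbackDeriv_congr (hfg : f =ᶠ[𝓝 x] g) (w : F) :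
    pullbackDeriv 𝕜 η f w x = pullbackDeriv 𝕜 η g w x := by
  rw [pullbackDeriv, pullbackDeriv, hfg.fderiv_eq]

theorem pullbackDeriv_self (hη : (fderiv 𝕜 η x).IsInvertible) (w : F) :
    pullbackDeriv 𝕜 η η w x = w :=
  fderiv_pullback η (fun _ => w) x hη

theorem pullbackDeriv_eq_sum {ι : Type*} [Fintype ι] [DecidableEq ι] (η : E → ι → 𝕜) (f : E → G)
    (w : ι → 𝕜) (x : E) :
    pullbackDeriv 𝕜 η f w x = ∑ l, w l • pullbackDeriv 𝕜 η f (Pi.single l 1) x := by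
  simp only [pullbackDeriv, pullback]
  conv_lhs => rw [pi_eq_sum_univ' w]
  simp only [map_sum, map_smul]

theorem pullbackDeriv_apply {ι : Type*} [Fintype ι] {f : E → ι → 𝕜}
    (hf : DifferentiableAt 𝕜 f x) (w : F) (l : ι) :
    pullbackDeriv 𝕜 η f w x l = pullbackDeriv 𝕜 η (fun y => f y l) w x := by
  rw [pullbackDeriv, pullbackDeriv, fderiv_apply hf l]
  rfl

theorem eventually_differentiableAt (hf : ContDiffAt 𝕜 1 f x) :
    ∀ᶠ y in 𝓝 x, DifferentiableAt 𝕜 f y :=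
  (hf.eventually (by simp)).mono fun _ hy => hy.differentiableAt one_ne_zero

variable [CompleteSpace E]

theorem eventually_isInvertible_fderiv (hη : ContDiffAt 𝕜 1 η x)
    (hinv : (fderiv 𝕜 η x).IsInvertible) : ∀ᶠ y in 𝓝 x, (fderiv 𝕜 η y).IsInvertible := by
  obtain ⟨e, he⟩ := hinv
  have hcont : ContinuousAt (fderiv 𝕜 η) x := hη.continuousAt_fderiv one_ne_zero
  exact hcont.eventually (he ▸ ContinuousLinearEquiv.nhds e)

theorem differentiableAt_pullback {V : F → F} (hη : ContDiffAt 𝕜 2 η x)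
    (hinv : (fderiv 𝕜 η x).IsInvertible) (hV : DifferentiableAt 𝕜 V (η x)) :
    DifferentiableAt 𝕜 (pullback 𝕜 η V) x := by
  rw [← fderivWithin_univ] at hinv
  rw [← differentiableWithinAt_univ, ← pullbackWithin_univ]
  exact DifferentiableWithinAt.pullbackWithin hV.differentiableWithinAt hη.contDiffWithinAt hinv
    uniqueDiffOn_univ (Set.mem_univ x) (Set.mapsTo_univ η Set.univ)

variable {n : WithTop ℕ∞}

theorem fderiv_lieBracket_const_pullback_const (hn : minSmoothness 𝕜 2 ≤ n)
    (hη : ContDiffAt 𝕜 n η x) (hinv : (fderiv 𝕜 η x).IsInvertible)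
    (hf : ContDiffAt 𝕜 n f x) (v : E) (w : F) :
    fderiv 𝕜 f x (lieBracket 𝕜 (fun _ => v) (pullback 𝕜 η fun _ => w) x) =
      fderiv 𝕜 (pullbackDeriv 𝕜 η f w) x v - pullbackDeriv 𝕜 η (fun y => fderiv 𝕜 f y v) w x :=
  fderiv_apply_lieBracket hf hn
    (differentiableAt_pullback (hη.of_le (le_minSmoothness.trans hn)) hinv
      (differentiableAt_const w))
    (differentiableAt_const v)

theorem lieBracket_const_pullback_const (hn : minSmoothness 𝕜 2 ≤ n)
    (hη : ContDiffAt 𝕜 n η x) (hinv : (fderiv 𝕜 η x).IsInvertible) (v : E) (w : F) :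
    lieBracket 𝕜 (fun _ => v) (pullback 𝕜 η fun _ => w) x =
      -pullback 𝕜 η (fun _ => pullbackDeriv 𝕜 η (fun y => fderiv 𝕜 η y v) w x) x := by
  have hη_one : ContDiffAt 𝕜 1 η x :=
    hη.of_le (one_le_two.trans (le_minSmoothness.trans hn))
  have hconst : pullbackDeriv 𝕜 η η w =ᶠ[𝓝 x] fun _ => w :=
    (eventually_isInvertible_fderiv hη_one hinv).mono fun _ hy => pullbackDeriv_self hy w
  have hbracket := fderiv_lieBracket_const_pullback_const hn hη hinv hη v w
  rw [hconst.fderiv_eq, fderiv_const_apply, zero_apply, zero_sub] at hbracket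
  rw [pullback, ← map_neg]
  exact (hinv.inverse_apply_eq.2 hbracket.symm).symm

theorem fderiv_pullbackDeriv_sub_pullbackDeriv_fderiv (hn : minSmoothness 𝕜 2 ≤ n)
    (hη : ContDiffAt 𝕜 n η x) (hinv : (fderiv 𝕜 η x).IsInvertible)
    (hf : ContDiffAt 𝕜 n f x) (v : E) (w : F) :
    fderiv 𝕜 (pullbackDeriv 𝕜 η f w) x v - pullbackDeriv 𝕜 η (fun y => fderiv 𝕜 f y v) w x =
      -pullbackDeriv 𝕜 η f (pullbackDeriv 𝕜 η (fun y => fderiv 𝕜 η y v) w x) x := by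
  rw [← fderiv_lieBracket_const_pullback_const hn hη hinv hf,
    lieBracket_const_pullback_const hn hη hinv, map_neg]
  rfl

end CoordinateFree

section Matrix

theorem isInvertible_iff_isUnit {R M : Type*} [Semiring R] [TopologicalSpace M] [AddCommMonoid M]
    [Module R M] (L : M →L[R] M) : L.IsInvertible ↔ IsUnit L :=
  ⟨fun ⟨e, he⟩ => ⟨e.toUnit, he⟩, fun ⟨u, hu⟩ => ⟨.ofUnit u, hu⟩⟩

variable {𝕜 ι : Type*} [NontriviallyNormedField 𝕜] [CompleteSpace 𝕜] [Fintype ι] [DecidableEq ι]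

theorem isInvertible_iff_isUnit_toMatrix' (L : (ι → 𝕜) →L[𝕜] ι → 𝕜) :
    L.IsInvertible ↔ IsUnit (LinearMap.toMatrix' (L : (ι → 𝕜) →ₗ[𝕜] ι → 𝕜)) := by
  rw [LinearMap.isUnit_toMatrix'_iff, isInvertible_iff_isUnit,
    ContinuousLinearMap.isUnit_iff_isUnit_toLinearMap]

theorem inverse_apply_eq_toMatrix'_inv_mulVec (L : (ι → 𝕜) →L[𝕜] ι → 𝕜) (w : ι → 𝕜) :
    L.inverse w = (LinearMap.toMatrix' (L : (ι → 𝕜) →ₗ[𝕜] ι → 𝕜))⁻¹ *ᵥ w := by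
  by_cases hL : L.IsInvertible
  · have hdet := (Matrix.isUnit_iff_isUnit_det _).1 ((isInvertible_iff_isUnit_toMatrix' L).1 hL)
    rw [hL.inverse_apply_eq, ← ContinuousLinearMap.coe_coe, ← LinearMap.toMatrix'_mulVec,
      Matrix.mulVec_mulVec, Matrix.mul_nonsing_inv _ hdet, Matrix.one_mulVec]
  · have hdet := mt (Matrix.isUnit_iff_isUnit_det _).2
      (mt (isInvertible_iff_isUnit_toMatrix' L).2 hL)
    rw [ContinuousLinearMap.inverse_of_not_isInvertible hL,
      Matrix.nonsing_inv_apply_not_isUnit _ hdet, zero_apply, Matrix.zero_mulVec]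

end Matrix

section Coordinates

variable {η : (Fin 3 → ℝ) → Fin 3 → ℝ} {f : (Fin 3 → ℝ) → ℝ} {x : Fin 3 → ℝ}

theorem pd_apply (hη : DifferentiableAt ℝ η x) (l j : Fin 3) :
    pd (fun y => η y l) j x = fderiv ℝ η x (Pi.single j 1) l := by
  rw [pd, fderiv_apply hη l]
  rfl

theorem Jac_eq_toMatrix' (hη : DifferentiableAt ℝ η x) :
    Jac η x = LinearMap.toMatrix' (fderiv ℝ η x : (Fin 3 → ℝ) →ₗ[ℝ] Fin 3 → ℝ) := by
  ext i l
  exact pd_apply hη i l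

theorem Deta_eq_pullbackDeriv (hη : DifferentiableAt ℝ η x) (f : (Fin 3 → ℝ) → ℝ) (i : Fin 3) :
    Deta η f i x = pullbackDeriv ℝ η f (Pi.single i 1) x := by
  rw [pullbackDeriv, pullback, inverse_apply_eq_toMatrix'_inv_mulVec, ← Jac_eq_toMatrix' hη,
    Matrix.mulVec_single_one, pi_eq_sum_univ' ((Jac η x)⁻¹.col i), map_sum]
  simp only [map_smul, smul_eq_mul, Matrix.col_apply]
  rfl

theorem Deta_pd_apply (hη : ContDiffAt ℝ 2 η x) (i j l : Fin 3) :
    Deta η (fun y => pd (fun z => η z l) j y) i x =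
      pullbackDeriv ℝ η (fun y => fderiv ℝ η y (Pi.single j 1)) (Pi.single i 1) x l := by
  have hdiff : ∀ᶠ y in 𝓝 x, DifferentiableAt ℝ η y :=
    eventually_differentiableAt (hη.of_le one_le_two)
  have hderiv : DifferentiableAt ℝ (fun y => fderiv ℝ η y (Pi.single j 1)) x :=
    ((hη.fderiv_right (m := 1) le_rfl).differentiableAt one_ne_zero).clm_apply
      (differentiableAt_const _)
  rw [pullbackDeriv_apply hderiv, Deta_eq_pullbackDeriv hdiff.self_of_nhds]
  exact pullbackDeriv_congr (hdiff.mono fun _ hy => pd_apply hy l j) _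

theorem commutator_pd_Deta_general (hη : ContDiffAt ℝ 2 η x) (hinv : IsUnit (Jac η x))
    (hf : ContDiffAt ℝ 2 f x) (i j : Fin 3) :
    pd (fun y => Deta η f i y) j x - Deta η (fun y => pd f j y) i x
      = -∑ l, Deta η (fun y => pd (fun z => η z l) j y) i x * Deta η f l x := by
  have hdiff : ∀ᶠ y in 𝓝 x, DifferentiableAt ℝ η y :=
    eventually_differentiableAt (hη.of_le one_le_two)
  have hηx : DifferentiableAt ℝ η x := hdiff.self_of_nhds
  have hDeta : Deta η f i =ᶠ[𝓝 x] pullbackDeriv ℝ η f (Pi.single i 1) :=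
    hdiff.mono fun _ hy => Deta_eq_pullbackDeriv hy f i
  rw [Jac_eq_toMatrix' hηx, ← isInvertible_iff_isUnit_toMatrix'] at hinv
  have hcomm := fderiv_pullbackDeriv_sub_pullbackDeriv_fderiv (by simp) hη hinv hf
    (Pi.single j 1) (Pi.single i 1)
  rw [pullbackDeriv_eq_sum η f, ← hDeta.fderiv_eq] at hcomm
  simp only [Deta_pd_apply hη, Deta_eq_pullbackDeriv hηx]
  exact hcomm

end Coordinates

/-- Second commutator identity of Lemma 2.1:
`[∂_j, ∂_i^η] f = −(∂_i^η ∂_j η_l) ∂_l^η f` (summation over `l`). -/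
theorem commutator_pd_Deta
    (η : (Fin 3 → ℝ) → Fin 3 → ℝ) (hη : ContDiff ℝ 2 η)
    (hinv : ∀ x, IsUnit (Jac η x))
    (f : (Fin 3 → ℝ) → ℝ) (hf : ContDiff ℝ 2 f)
    (i j : Fin 3) (x : Fin 3 → ℝ) :
    pd (fun y => Deta η f i y) j x - Deta η (fun y => pd f j y) i x
      = -∑ l, Deta η (fun y => pd (fun z => η z l) j y) i x * Deta η f l x := by
  exact commutator_pd_Deta_general hη.contDiffAt (hinv x) hf.contDiffAt i j
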